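/- For all integers k ≥ 2 and n ≥ 1, every probability vector p with all p_i > 0, and every real t > 0, the tail probability satisfies P(n·D(p̂‖p) > t) ≤ G_{k,n}(1) · exp(−t). -/

import Mathlib

/-!
The bound is Markov's inequality for `exp (n · D(p̂‖p))`. Each factor `p i ^ X i` of the multinomial
probability cancels against the corresponding factor of the exponential, so that
`E exp (n · D(p̂‖p)) = ∑_X (n! / ∏ Xᵢ!) ∏ (Xᵢ / n) ^ Xᵢ` does not depend on `p`, and this sum is
exactly `G_{k,n}(1)`.

The last evaluation amounts to
`∑_{X₁+⋯+X_k = n} ∏ Xᵢ ^ Xᵢ / Xᵢ! = ∑_{m+r = n} C(m+k-2, k-2) n ^ r / r!` (`sum_prod_selfPow`),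
proved by induction on `k`. The induction step splits off one coordinate and combines an
Abel-type identity
`∑_{j+r = N} (j ^ j / j!) ((r+y) ^ r / r!) = ∑_{l+r = N} (N+y) ^ r / r!` (`abel_identity`)
with the hockey-stick identity. The Abel-type identity follows by expanding
`(r+y) ^ r = ((N+y) - j) ^ r` binomially: the coefficient of `(N+y) ^ s / s!` is then an iterated
finite difference of the monomial `x ^ u` of order `u = N - s`, divided by `u!`, hence equal to `1`.
-/


open Finset

/-- The polynomial `G_{k,n}(λ) = ∑_{m=0}^n (n!/(n^m (n-m)!)) C(m+k-2, k-2) λ^m`. -/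
noncomputable def Gpoly (k n : ℕ) (l : ℝ) : ℝ :=
  ∑ m ∈ Finset.range (n + 1),
    (Nat.factorial n : ℝ) / ((n : ℝ) ^ m * (Nat.factorial (n - m) : ℝ)) *
      (Nat.choose (m + k - 2) (k - 2) : ℝ) * l ^ m
/-- `G_{k,n}(λ, p)`: sum over tuples of nonnegative integers summing to `n` of the
multinomial coefficient times `∏ i (λ Xᵢ/n + (1-λ) pᵢ)^{Xᵢ}` (with `0^0 = 1`). -/
noncomputable def Gfun (k n : ℕ) (l : ℝ) (p : Fin k → ℝ) : ℝ :=
  ∑ X ∈ Finset.Nat.antidiagonalTuple k n,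
    (Nat.multinomial Finset.univ X : ℝ) *
      ∏ i, (l * (X i : ℝ) / (n : ℝ) + (1 - l) * p i) ^ (X i)
/-- Multinomial probability of the tuple of counts `X` under probability vector `p`. -/
noncomputable def multP (k : ℕ) (p : Fin k → ℝ) (X : Fin k → ℕ) : ℝ :=
  (Nat.multinomial Finset.univ X : ℝ) * ∏ i, p i ^ (X i)

/-- Relative entropy `D(p̂ ‖ p)` of the empirical distribution `X/n` w.r.t. `p`
(with the convention `0 · log 0 = 0`, automatic since `Real.log 0 = 0`). -/
noncomputable def relEnt (k n : ℕ) (p : Fin k → ℝ) (X : Fin k → ℕ) : ℝ :=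
  ∑ i, ((X i : ℝ) / (n : ℝ)) * Real.log ((X i : ℝ) / ((n : ℝ) * p i))

/-- Moment generating function `φ_{k,n}(λ, p) = E exp(λ n D(p̂‖p))`. -/
noncomputable def phi (k n : ℕ) (l : ℝ) (p : Fin k → ℝ) : ℝ :=
  ∑ X ∈ Finset.Nat.antidiagonalTuple k n,
    multP k p X * Real.exp (l * (n : ℝ) * relEnt k n p X)

open scoped Classical in
/-- Tail probability `P(n D(p̂‖p) > t)`. -/
noncomputable def tailP (k n : ℕ) (p : Fin k → ℝ) (t : ℝ) : ℝ :=
  ∑ X ∈ (Finset.Nat.antidiagonalTuple k n).filter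
      (fun X => t < (n : ℝ) * relEnt k n p X),
    multP k p X

/-! ### Reindexing sums over triples of natural numbers with given sum -/

lemma sum_antidiagonal_assoc (f : ℕ → ℕ → ℕ → ℝ) (n : ℕ) :
    ∑ p ∈ antidiagonal n, ∑ q ∈ antidiagonal p.2, f p.1 q.1 q.2 =
      ∑ p ∈ antidiagonal n, ∑ q ∈ antidiagonal p.1, f q.1 q.2 p.2 := by
  rw [Finset.sum_sigma', Finset.sum_sigma']
  refine Finset.sum_nbij' (fun x => ⟨(x.1.1 + x.2.1, x.2.2), (x.1.1, x.2.1)⟩)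
    (fun x => ⟨(x.2.1, x.2.2 + x.1.2), (x.2.2, x.1.2)⟩) ?_ ?_ ?_ ?_ ?_
  · rintro ⟨⟨a, b⟩, ⟨c, d⟩⟩ h
    simp only [mem_sigma, HasAntidiagonal.mem_antidiagonal] at h ⊢
    lia
  · rintro ⟨⟨a, b⟩, ⟨c, d⟩⟩ h
    simp only [mem_sigma, HasAntidiagonal.mem_antidiagonal] at h ⊢
    lia
  · rintro ⟨⟨a, b⟩, ⟨c, d⟩⟩ h
    simp only [mem_sigma, HasAntidiagonal.mem_antidiagonal] at h ⊢
    obtain ⟨_, rfl⟩ := h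
    rfl
  · rintro ⟨⟨a, b⟩, ⟨c, d⟩⟩ h
    simp only [mem_sigma, HasAntidiagonal.mem_antidiagonal] at h ⊢
    obtain ⟨_, rfl⟩ := h
    rfl
  · intros
    rfl

lemma sum_antidiagonal_left_comm (f : ℕ → ℕ → ℕ → ℝ) (n : ℕ) :
    ∑ p ∈ antidiagonal n, ∑ q ∈ antidiagonal p.2, f p.1 q.1 q.2 =
      ∑ p ∈ antidiagonal n, ∑ q ∈ antidiagonal p.2, f q.1 p.1 q.2 := by
  rw [sum_antidiagonal_assoc f, sum_antidiagonal_assoc fun a b c => f b a c]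
  exact Finset.sum_congr rfl fun p _ =>
    (Finset.Nat.sum_antidiagonal_swap (f := fun q => f q.1 q.2 p.2)).symm

/-! ### An Abel-type identity -/

/-- Up to the factor `u!`, the left side is the `u`-th finite difference of `x ^ u` at `0`. -/
lemma sum_selfPow_mul_neg_pow (u : ℕ) :
    ∑ q ∈ antidiagonal u, (q.1 : ℝ) ^ q.1 / (q.1.factorial : ℝ) *
      ((-(q.1 : ℝ)) ^ q.2 / (q.2.factorial : ℝ)) = 1 := by
  have h := congrFun (fwdDiff_iter_eq_factorial (R := ℝ) (n := u)) 0
  rw [fwdDiff_iter_eq_sum_shift] at h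
  simp only [zero_add, nsmul_eq_mul, mul_one, zsmul_eq_mul, Pi.natCast_apply] at h
  have hu : (u.factorial : ℝ) ≠ 0 := by positivity
  rw [Finset.Nat.sum_antidiagonal_eq_sum_range_succ_mk]
  apply mul_left_cancel₀ hu
  rw [mul_one]
  refine Eq.trans ?_ h
  rw [Finset.mul_sum]
  refine Finset.sum_congr rfl fun j hj => ?_
  have hj' : j ≤ u := by simpa [Nat.lt_succ_iff] using hj
  push_cast
  rw [Nat.cast_choose ℝ hj', neg_pow]
  have : (j : ℝ) ^ u = (j : ℝ) ^ j * (j : ℝ) ^ (u - j) := by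
    rw [← pow_add, Nat.add_sub_cancel' hj']
  rw [this]
  have h1 : (j.factorial : ℝ) ≠ 0 := by positivity
  have h2 : ((u - j).factorial : ℝ) ≠ 0 := by positivity
  field_simp

lemma add_pow_div_factorial (x y : ℝ) (r : ℕ) :
    (x + y) ^ r / (r.factorial : ℝ) =
      ∑ q ∈ antidiagonal r, x ^ q.1 / (q.1.factorial : ℝ) * (y ^ q.2 / (q.2.factorial : ℝ)) := by
  rw [add_pow, Finset.sum_div, Finset.Nat.sum_antidiagonal_eq_sum_range_succ_mk]
  refine Finset.sum_congr rfl fun j hj => ?_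
  have hj' : j ≤ r := by simpa [Nat.lt_succ_iff] using hj
  rw [Nat.cast_choose ℝ hj']
  have h0 : (r.factorial : ℝ) ≠ 0 := by positivity
  have h1 : (j.factorial : ℝ) ≠ 0 := by positivity
  have h2 : ((r - j).factorial : ℝ) ≠ 0 := by positivity
  field_simp

lemma abel_identity (y : ℝ) (N : ℕ) :
    ∑ p ∈ antidiagonal N, (p.1 : ℝ) ^ p.1 / (p.1.factorial : ℝ) *
        (((p.2 : ℝ) + y) ^ p.2 / (p.2.factorial : ℝ)) =
      ∑ p ∈ antidiagonal N, ((N : ℝ) + y) ^ p.2 / (p.2.factorial : ℝ) := by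
  calc
    _ = ∑ p ∈ antidiagonal N, ∑ q ∈ antidiagonal p.2,
          (p.1 : ℝ) ^ p.1 / (p.1.factorial : ℝ) *
            ((-(p.1 : ℝ)) ^ q.1 / (q.1.factorial : ℝ)) *
            (((N : ℝ) + y) ^ q.2 / (q.2.factorial : ℝ)) := by
        refine Finset.sum_congr rfl fun p hp => ?_
        have hN : (p.1 : ℝ) + p.2 = N := by exact_mod_cast HasAntidiagonal.mem_antidiagonal.1 hp
        have : (p.2 : ℝ) + y = -(p.1 : ℝ) + ((N : ℝ) + y) := by linarith
        rw [this, add_pow_div_factorial, Finset.mul_sum]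
        exact Finset.sum_congr rfl fun q _ => by ring
    _ = _ := by
        rw [sum_antidiagonal_assoc fun a b c => (a : ℝ) ^ a / (a.factorial : ℝ) *
            ((-(a : ℝ)) ^ b / (b.factorial : ℝ)) * (((N : ℝ) + y) ^ c / (c.factorial : ℝ))]
        refine Finset.sum_congr rfl fun p _ => ?_
        rw [← Finset.sum_mul, sum_selfPow_mul_neg_pow, one_mul]

/-! ### Evaluation of the sum over tuples -/

lemma sum_antidiagonalTuple_succ (k n : ℕ) (f : (Fin (k + 1) → ℕ) → ℝ) :
    ∑ X ∈ Finset.Nat.antidiagonalTuple (k + 1) n, f X =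
      ∑ p ∈ antidiagonal n, ∑ Y ∈ Finset.Nat.antidiagonalTuple k p.2, f (Fin.cons p.1 Y) := by
  rw [Finset.sum_sigma']
  refine Finset.sum_nbij' (fun X => ⟨(X 0, ∑ i, Fin.tail X i), Fin.tail X⟩)
    (fun x => Fin.cons x.1.1 x.2) ?_ ?_ ?_ ?_ ?_
  · intro X h
    simpa [Finset.Nat.mem_antidiagonalTuple, Fin.sum_univ_succ, Fin.tail] using h
  · rintro ⟨⟨a, b⟩, Y⟩ h
    simp only [mem_sigma, HasAntidiagonal.mem_antidiagonal, Finset.Nat.mem_antidiagonalTuple] at h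
    simp [Finset.Nat.mem_antidiagonalTuple, Fin.sum_univ_succ, h.1, h.2]
  · intro X h
    simp
  · rintro ⟨⟨a, b⟩, Y⟩ h
    simp only [mem_sigma, HasAntidiagonal.mem_antidiagonal, Finset.Nat.mem_antidiagonalTuple] at h
    obtain ⟨_, rfl⟩ := h
    simp
  · intro X h
    simp

lemma sum_antidiagonal_choose (k s : ℕ) :
    ∑ q ∈ antidiagonal s, ((q.1 + k).choose k : ℝ) = ((s + (k + 1)).choose (k + 1) : ℝ) := by
  rw [Finset.Nat.sum_antidiagonal_eq_sum_range_succ_mk, ← add_assoc]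
  exact_mod_cast Nat.sum_range_add_choose s k

lemma sum_prod_selfPow (k n : ℕ) :
    ∑ X ∈ Finset.Nat.antidiagonalTuple (k + 2) n,
        ∏ i, (X i : ℝ) ^ X i / ((X i).factorial : ℝ) =
      ∑ p ∈ antidiagonal n, ((p.1 + k).choose k : ℝ) *
        ((n : ℝ) ^ p.2 / (p.2.factorial : ℝ)) := by
  induction k generalizing n with
  | zero =>
    rw [sum_antidiagonalTuple_succ]
    have h := abel_identity 0 n
    simp only [add_zero] at h
    simpa [Fin.prod_univ_succ, div_mul_div_comm] using h
  | succ k ih =>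
    rw [sum_antidiagonalTuple_succ]
    calc
      _ = ∑ p ∈ antidiagonal n, ∑ q ∈ antidiagonal p.2,
            (p.1 : ℝ) ^ p.1 / (p.1.factorial : ℝ) * (((q.1 + k).choose k : ℝ) *
              (((q.2 : ℝ) + q.1) ^ q.2 / (q.2.factorial : ℝ))) := by
          refine Finset.sum_congr rfl fun p _ => ?_
          simp only [Fin.prod_univ_succ (n := k + 2), Fin.cons_zero, Fin.cons_succ]
          rw [← Finset.mul_sum, ih, Finset.mul_sum]
          refine Finset.sum_congr rfl fun q hq => ?_
          rw [← HasAntidiagonal.mem_antidiagonal.1 hq]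
          push_cast
          rw [add_comm (q.1 : ℝ)]
      _ = ∑ p ∈ antidiagonal n, ∑ q ∈ antidiagonal p.2,
            (q.1 : ℝ) ^ q.1 / (q.1.factorial : ℝ) * (((p.1 + k).choose k : ℝ) *
              (((q.2 : ℝ) + p.1) ^ q.2 / (q.2.factorial : ℝ))) :=
          sum_antidiagonal_left_comm (fun a b c => (a : ℝ) ^ a / (a.factorial : ℝ) *
            (((b + k).choose k : ℝ) * (((c : ℝ) + b) ^ c / (c.factorial : ℝ)))) n
      _ = ∑ p ∈ antidiagonal n, ∑ q ∈ antidiagonal p.2,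
            ((p.1 + k).choose k : ℝ) * ((n : ℝ) ^ q.2 / (q.2.factorial : ℝ)) := by
          refine Finset.sum_congr rfl fun p hp => ?_
          have hN : (p.2 : ℝ) + p.1 = n := by
            rw [add_comm]
            exact_mod_cast HasAntidiagonal.mem_antidiagonal.1 hp
          have h := abel_identity p.1 p.2
          rw [hN] at h
          rw [← Finset.mul_sum, ← h, Finset.mul_sum]
          exact Finset.sum_congr rfl fun q _ => by ring
      _ = _ := by
          rw [sum_antidiagonal_assoc fun a _ c =>
            ((a + k).choose k : ℝ) * ((n : ℝ) ^ c / (c.factorial : ℝ))]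
          refine Finset.sum_congr rfl fun p _ => ?_
          rw [← Finset.sum_mul, sum_antidiagonal_choose]

/-! ### The exponential moment and Markov's inequality -/

/-- The probabilities `p i` cancel in the exponential moment at `λ = 1`. -/
lemma multP_mul_exp (k n : ℕ) (hn : 1 ≤ n) (p : Fin k → ℝ) (hp : ∀ i, 0 < p i)
    (X : Fin k → ℕ) (hX : ∑ i, X i = n) :
    multP k p X * Real.exp ((n : ℝ) * relEnt k n p X) =
      (n.factorial : ℝ) / (n : ℝ) ^ n * ∏ i, (X i : ℝ) ^ X i / ((X i).factorial : ℝ) := by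
  have hn0 : (n : ℝ) ≠ 0 := by
    have : n ≠ 0 := by lia
    exact_mod_cast this
  have hmul : (Nat.multinomial Finset.univ X : ℝ) =
      (n.factorial : ℝ) / ∏ i, ((X i).factorial : ℝ) := by
    have h := Nat.multinomial_spec Finset.univ X
    rw [hX] at h
    rw [eq_div_iff (Finset.prod_ne_zero_iff.2 fun i _ => by positivity), mul_comm]
    exact_mod_cast h
  have hexp : Real.exp ((n : ℝ) * relEnt k n p X) =
      ∏ i, ((X i : ℝ) / ((n : ℝ) * p i)) ^ X i := by
    rw [relEnt, Finset.mul_sum, Real.exp_sum]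
    refine Finset.prod_congr rfl fun i _ => ?_
    rcases Nat.eq_zero_or_pos (X i) with h | h
    · simp [h]
    · have hpos : 0 < (X i : ℝ) / ((n : ℝ) * p i) := by
        have := hp i
        positivity
      rw [← mul_assoc, mul_div_cancel₀ _ hn0, Real.exp_nat_mul, Real.exp_log hpos]
  have hpow : (n : ℝ) ^ n = ∏ i, (n : ℝ) ^ X i := by
    rw [Finset.prod_pow_eq_pow_sum, hX]
  have hcancel : (∏ i, p i ^ X i) * ∏ i, ((X i : ℝ) / ((n : ℝ) * p i)) ^ X i =
      (∏ i, (X i : ℝ) ^ X i) / ∏ i, (n : ℝ) ^ X i := by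
    rw [← Finset.prod_mul_distrib, ← Finset.prod_div_distrib]
    refine Finset.prod_congr rfl fun i _ => ?_
    have := (hp i).ne'
    rw [← mul_pow, ← div_pow]
    congr 1
    field_simp
  rw [multP, hmul, hexp, mul_assoc, hcancel, ← hpow, Finset.prod_div_distrib]
  ring

lemma sum_multP_mul_exp (k n : ℕ) (hk : 2 ≤ k) (hn : 1 ≤ n)
    (p : Fin k → ℝ) (hp : ∀ i, 0 < p i) :
    ∑ X ∈ Finset.Nat.antidiagonalTuple k n,
      multP k p X * Real.exp ((n : ℝ) * relEnt k n p X) = Gpoly k n 1 := by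
  obtain ⟨k, rfl⟩ := Nat.exists_eq_add_of_le' hk
  rw [Finset.sum_congr rfl fun X hX =>
    multP_mul_exp (k + 2) n hn p hp X (Finset.Nat.mem_antidiagonalTuple.1 hX),
    ← Finset.mul_sum, sum_prod_selfPow, Gpoly,
    Finset.Nat.sum_antidiagonal_eq_sum_range_succ_mk, Finset.mul_sum]
  refine Finset.sum_congr rfl fun m hm => ?_
  have hm' : m ≤ n := by simpa [Nat.lt_succ_iff] using hm
  have hn0 : (n : ℝ) ≠ 0 := by
    have : n ≠ 0 := by lia
    exact_mod_cast this
  have hsplit : (n : ℝ) ^ n = (n : ℝ) ^ m * (n : ℝ) ^ (n - m) := by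
    rw [← pow_add, Nat.add_sub_cancel' hm']
  have h1 : m + (k + 2) - 2 = m + k := by lia
  rw [hsplit, h1, Nat.add_sub_cancel, one_pow, mul_one]
  have h2 : ((n - m).factorial : ℝ) ≠ 0 := by positivity
  field_simp

theorem tail_bound_combinatorial (k n : ℕ) (hk : 2 ≤ k) (hn : 1 ≤ n)
    (p : Fin k → ℝ) (hp : ∀ i, 0 < p i) (hps : ∑ i, p i = 1)
    (t : ℝ) (ht : 0 < t) :
    tailP k n p t ≤ Gpoly k n 1 * Real.exp (-t) := by
  have hP : ∀ X, 0 ≤ multP k p X := fun X =>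
    mul_nonneg (Nat.cast_nonneg _) (Finset.prod_nonneg fun i _ => pow_nonneg (hp i).le _)
  rw [← sum_multP_mul_exp k n hk hn p hp, Finset.sum_mul, tailP]
  refine (Finset.sum_le_sum fun X hX => ?_).trans
    (Finset.sum_le_sum_of_subset_of_nonneg (Finset.filter_subset _ _) fun X _ _ =>
      mul_nonneg (mul_nonneg (hP X) (Real.exp_nonneg _)) (Real.exp_nonneg _))
  have hlt : t < (n : ℝ) * relEnt k n p X := (Finset.mem_filter.1 hX).2
  rw [mul_assoc, ← Real.exp_add]
  exact le_mul_of_one_le_right (hP X) (Real.one_le_exp (by linarith))
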